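/- Let {A^k}_{k≥0} be a greedy HOOI sequence. Then every block-nondegenerate limit point of {A^k} is a critical point and a block-wise maximizer. -/

import Mathlib

open Matrix BigOperators Filter

def froSq {ι κ : Type*} [Fintype ι] [Fintype κ] (M : Matrix ι κ ℝ) : ℝ :=
  ∑ i, ∑ j, (M i j) ^ 2

noncomputable def fro {ι κ : Type*} [Fintype ι] [Fintype κ] (M : Matrix ι κ ℝ) : ℝ :=
  Real.sqrt (froSq M)

noncomputable def eigList {m : ℕ} {κ : Type*} [Fintype κ] (Y : Matrix (Fin m) κ ℝ) : List ℝ :=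
  ((((Finset.univ : Finset (Fin m)).val.map
      (fun j => (Matrix.isHermitian_mul_conjTranspose_self Y).eigenvalues j)).sort (· ≤ ·)).reverse)

noncomputable def sval {m : ℕ} {κ : Type*} [Fintype κ] (Y : Matrix (Fin m) κ ℝ) (i : ℕ) : ℝ :=
  Real.sqrt ((eigList Y).getD (i - 1) 0)

/-- Feasibility: every factor matrix has orthonormal columns. -/
def TFeas {N : ℕ} {I r : Fin N → ℕ}
    (A : (n : Fin N) → Matrix (Fin (I n)) (Fin (r n)) ℝ) : Prop :=
  ∀ n, (A n)ᵀ * A n = 1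

/-- `Gₙ(A) = unfoldₙ(X ×₁ A₁ᵀ ⋯ ×_{n−1} A_{n−1}ᵀ ×_{n+1} A_{n+1}ᵀ ⋯ ×_N A_Nᵀ)`. -/
noncomputable def Gmat {N : ℕ} {I r : Fin N → ℕ} (X : ((n : Fin N) → Fin (I n)) → ℝ)
    (A : (n : Fin N) → Matrix (Fin (I n)) (Fin (r n)) ℝ) (n : Fin N) :
    Matrix (Fin (I n)) ((m : {m : Fin N // m ≠ n}) → Fin (r m.1)) ℝ :=
  fun j c => ∑ idx : ((m : {m : Fin N // m ≠ n}) → Fin (I m.1)),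
    X (fun i => if h : i = n then Fin.cast (by rw [h]) j else idx ⟨i, h⟩) *
      ∏ m : {m : Fin N // m ≠ n}, A m.1 (idx m) (c m)

/-- `f(A) = ‖X ×₁ A₁ᵀ ⋯ ×_N A_Nᵀ‖_F²`. -/
noncomputable def fval {N : ℕ} {I r : Fin N → ℕ} (X : ((n : Fin N) → Fin (I n)) → ℝ)
    (A : (n : Fin N) → Matrix (Fin (I n)) (Fin (r n)) ℝ) : ℝ :=
  ∑ c : ((n : Fin N) → Fin (r n)),
    (∑ idx : ((n : Fin N) → Fin (I n)), X idx * ∏ n, A n (idx n) (c n)) ^ 2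

/-- A critical point: `Gₙ(A)Gₙ(A)ᵀAₙ = AₙAₙᵀGₙ(A)Gₙ(A)ᵀAₙ` for all `n`. -/
def Critical {N : ℕ} {I r : Fin N → ℕ} (X : ((n : Fin N) → Fin (I n)) → ℝ)
    (A : (n : Fin N) → Matrix (Fin (I n)) (Fin (r n)) ℝ) : Prop :=
  ∀ n, Gmat X A n * (Gmat X A n)ᵀ * A n =
    A n * (A n)ᵀ * (Gmat X A n * (Gmat X A n)ᵀ * A n)

/-- A block-wise maximizer. -/
def BlockMax {N : ℕ} {I r : Fin N → ℕ} (X : ((n : Fin N) → Fin (I n)) → ℝ)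
    (A : (n : Fin N) → Matrix (Fin (I n)) (Fin (r n)) ℝ) : Prop :=
  ∀ n, ∀ B : Matrix (Fin (I n)) (Fin (r n)) ℝ, Bᵀ * B = 1 →
    froSq (Bᵀ * Gmat X A n) ≤ froSq ((A n)ᵀ * Gmat X A n)

/-- Block-nondegeneracy: `σ_{rₙ}(Gₙ(A)) > σ_{rₙ+1}(Gₙ(A))` for all `n`. -/
def NonDeg {N : ℕ} {I r : Fin N → ℕ} (X : ((n : Fin N) → Fin (I n)) → ℝ)
    (A : (n : Fin N) → Matrix (Fin (I n)) (Fin (r n)) ℝ) : Prop :=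
  ∀ n, sval (Gmat X A n) (r n + 1) < sval (Gmat X A n) (r n)

/-- The hybrid tuple used in HOOI: the already-updated blocks `i < n` come from
`Anew`, the rest from `Aold`. -/
def hyb {N : ℕ} {I r : Fin N → ℕ}
    (Aold Anew : (n : Fin N) → Matrix (Fin (I n)) (Fin (r n)) ℝ) (n : Fin N) :
    (i : Fin N) → Matrix (Fin (I i)) (Fin (r i)) ℝ :=
  fun i => if i < n then Anew i else Aold i

/-- `Gₙ^k = unfoldₙ(X ×₁ (A₁^{k+1})ᵀ ⋯ ×_{n−1} (A_{n−1}^{k+1})ᵀ ×_{n+1} (A_{n+1}^k)ᵀ ⋯ ×_N (A_N^k)ᵀ)`. -/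
noncomputable def Gseq {N : ℕ} {I r : Fin N → ℕ} (X : ((n : Fin N) → Fin (I n)) → ℝ)
    (A : ℕ → (n : Fin N) → Matrix (Fin (I n)) (Fin (r n)) ℝ) (k : ℕ) (n : Fin N) :
    Matrix (Fin (I n)) ((m : {m : Fin N // m ≠ n}) → Fin (r m.1)) ℝ :=
  Gmat X (hyb (A k) (A (k + 1)) n) n

/-- A HOOI sequence. -/
def IsHOOI {N : ℕ} {I r : Fin N → ℕ} (X : ((n : Fin N) → Fin (I n)) → ℝ)
    (A : ℕ → (n : Fin N) → Matrix (Fin (I n)) (Fin (r n)) ℝ) : Prop :=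
  (∀ k, TFeas (A k)) ∧
  ∀ k (n : Fin N), ∀ B : Matrix (Fin (I n)) (Fin (r n)) ℝ, Bᵀ * B = 1 →
    froSq (Bᵀ * Gseq X A k n) ≤ froSq ((A (k + 1) n)ᵀ * Gseq X A k n)

/-- A greedy HOOI sequence. -/
def IsGreedyHOOI {N : ℕ} {I r : Fin N → ℕ} (X : ((n : Fin N) → Fin (I n)) → ℝ)
    (A : ℕ → (n : Fin N) → Matrix (Fin (I n)) (Fin (r n)) ℝ) : Prop :=
  IsHOOI X A ∧
  ∀ k (n : Fin N), ∀ B : Matrix (Fin (I n)) (Fin (r n)) ℝ, Bᵀ * B = 1 →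
    (∀ C : Matrix (Fin (I n)) (Fin (r n)) ℝ, Cᵀ * C = 1 →
      froSq (Cᵀ * Gseq X A k n) ≤ froSq (Bᵀ * Gseq X A k n)) →
    fro (A (k + 1) n - A k n) ≤ fro (B - A k n)

/-- `Ā` is a limit point of the sequence `{A^k}` (blockwise in Frobenius norm). -/
def IsLimitPt {N : ℕ} {I r : Fin N → ℕ}
    (A : ℕ → (n : Fin N) → Matrix (Fin (I n)) (Fin (r n)) ℝ)
    (Abar : (n : Fin N) → Matrix (Fin (I n)) (Fin (r n)) ℝ) : Prop :=
  ∃ φ : ℕ → ℕ, StrictMono φ ∧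
    ∀ n, Tendsto (fun k => fro (A (φ k) n - Abar n)) atTop (nhds 0)

/-- `‖A − B‖_F = √(∑ₙ ‖Aₙ − Bₙ‖_F²)` on tuples. -/
noncomputable def tdist {N : ℕ} {I r : Fin N → ℕ}
    (A B : (n : Fin N) → Matrix (Fin (I n)) (Fin (r n)) ℝ) : ℝ :=
  Real.sqrt (∑ n, froSq (A n - B n))

/-- A local maximizer of `f` over the feasible set. -/
def LocalMax {N : ℕ} {I r : Fin N → ℕ} (X : ((n : Fin N) → Fin (I n)) → ℝ)
    (A : (n : Fin N) → Matrix (Fin (I n)) (Fin (r n)) ℝ) : Prop :=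
  TFeas A ∧ ∃ ε > (0 : ℝ), ∀ B : (n : Fin N) → Matrix (Fin (I n)) (Fin (r n)) ℝ,
    TFeas B → tdist B A ≤ ε → fval X B ≤ fval X A

/-- A globally optimal solution. -/
def GlobalMax {N : ℕ} {I r : Fin N → ℕ} (X : ((n : Fin N) → Fin (I n)) → ℝ)
    (A : (n : Fin N) → Matrix (Fin (I n)) (Fin (r n)) ℝ) : Prop :=
  TFeas A ∧ ∀ B : (n : Fin N) → Matrix (Fin (I n)) (Fin (r n)) ℝ,
    TFeas B → fval X B ≤ fval X A

/-!
A spectral gap turns Ky Fan's maximum principle into the estimate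
`(σ_r² - σ_{r+1}²) ‖CCᵀ - BBᵀ‖² ≤ 2 (‖CᵀG‖² - ‖BᵀG‖²)` for orthonormal frames, where `C` consists of
top eigenvectors of `GGᵀ`. Hence all maximizers of `‖BᵀG‖` have the same projector `BBᵀ`, which
commutes with `GGᵀ`: they differ by a rotation of the columns, and the maximizer nearest to `A`
converges to `Ā` as soon as `A` does and `Ā` is a maximizer for the limiting, gapped `G`.

No block update of HOOI decreases `f`, which is bounded, so the gain of every single update tends
to zero. Along a subsequence converging to `Ā`, go through the blocks in order: if the updated
blocks before `n` converge to those of `Ā`, then `G_n^k` converges to `G_n(Ā)`, the vanishing gain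
makes `Ā_n` a maximizer for `G_n(Ā)`, and greediness brings the updated block `n` to `Ā_n` as well.
-/

lemma froSq_eq_trace {ι κ : Type*} [Fintype ι] [Fintype κ] (M : Matrix ι κ ℝ) :
    froSq M = (M * Mᵀ).trace := by
  simp [froSq, trace, mul_apply, pow_two]

section Frobenius

open scoped Matrix.Norms.Frobenius

variable {ι κ : Type*} [Fintype ι] [Fintype κ]

lemma froSq_eq_norm_sq (M : Matrix ι κ ℝ) : froSq M = ‖M‖ ^ 2 := by
  have h : 0 ≤ froSq M := by unfold froSq; positivity
  simp only [frobenius_norm_def, Real.norm_eq_abs, Real.rpow_two, sq_abs]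
  rw [← Real.sqrt_eq_rpow]
  exact (Real.sq_sqrt h).symm

lemma fro_eq_norm (M : Matrix ι κ ℝ) : fro M = ‖M‖ := by
  rw [fro, froSq_eq_norm_sq, Real.sqrt_sq (norm_nonneg M)]

lemma froSq_nonneg (M : Matrix ι κ ℝ) : 0 ≤ froSq M :=
  froSq_eq_norm_sq M ▸ sq_nonneg ‖M‖

lemma froSq_eq_zero {M : Matrix ι κ ℝ} : froSq M = 0 ↔ M = 0 := by
  rw [froSq_eq_norm_sq, sq_eq_zero_iff, norm_eq_zero]

lemma fro_eq_zero {M : Matrix ι κ ℝ} : fro M = 0 ↔ M = 0 := by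
  rw [fro_eq_norm, norm_eq_zero]

lemma continuous_froSq : Continuous (froSq : Matrix ι κ ℝ → ℝ) := by
  unfold froSq
  fun_prop

lemma continuous_fro : Continuous (fro : Matrix ι κ ℝ → ℝ) :=
  Real.continuous_sqrt.comp continuous_froSq

lemma tendsto_iff_fro_sub_tendsto_zero {α : Type*} {l : Filter α} {u : α → Matrix ι κ ℝ}
    {M : Matrix ι κ ℝ} : Tendsto u l (nhds M) ↔ Tendsto (fun k => fro (u k - M)) l (nhds 0) := by
  simp only [fro_eq_norm]
  exact tendsto_iff_norm_sub_tendsto_zero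

lemma isCompact_setOf_transpose_mul_self_eq_one {ι ρ : Type*} [Fintype ι] [Finite ρ]
    [DecidableEq ρ] : IsCompact {B : Matrix ι ρ ℝ | Bᵀ * B = 1} := by
  have := Fintype.ofFinite ρ
  have : ProperSpace (Matrix ι ρ ℝ) := FiniteDimensional.proper ℝ _
  refine Metric.isCompact_of_isClosed_isBounded (isClosed_eq (by fun_prop) continuous_const)
    (isBounded_iff_forall_norm_le.2 ⟨√(Fintype.card ρ), fun B (hB : Bᵀ * B = 1) => ?_⟩)
  apply Real.le_sqrt_of_sq_le
  rw [← froSq_eq_norm_sq, froSq_eq_trace, trace_mul_comm, hB, trace_one]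

end Frobenius

section StarProjection

variable {ι : Type*} [Fintype ι]

lemma trace_mul_nonneg_of_posSemidef {M P : Matrix ι ι ℝ} (hM : M.PosSemidef)
    (hP : IsStarProjection P) : 0 ≤ (M * P).trace := by
  have h := (hM.mul_mul_conjTranspose_same P).trace_nonneg
  rwa [← star_eq_conjTranspose, hP.isSelfAdjoint, mul_assoc, trace_mul_comm, mul_assoc,
    hP.isIdempotentElem] at h

lemma froSq_sub_of_isStarProjection {P Q : Matrix ι ι ℝ} (hP : IsStarProjection P)
    (hQ : IsStarProjection Q) : froSq (Q - P) = Q.trace + P.trace - 2 * (Q * P).trace := by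
  have h : (Q - P)ᵀ = Q - P := hQ.isSelfAdjoint.sub hP.isSelfAdjoint
  rw [froSq_eq_trace, h, sub_mul, mul_sub, mul_sub, hP.isIdempotentElem.eq,
    hQ.isIdempotentElem.eq, trace_sub, trace_sub, trace_sub, trace_mul_comm P Q]
  ring

lemma mul_froSq_sub_le_of_posSemidef [DecidableEq ι] {S P Q : Matrix ι ι ℝ} {a b : ℝ}
    (hP : IsStarProjection P) (hQ : IsStarProjection Q) (htr : P.trace = Q.trace)
    (ha : ((S - a • 1) * Q).PosSemidef) (hb : ((b • 1 - S) * (1 - Q)).PosSemidef) :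
    (a - b) * froSq (Q - P) ≤ 2 * ((S * Q).trace - (S * P).trace) := by
  have h₁ := trace_mul_nonneg_of_posSemidef ha hP.one_sub
  have h₂ := trace_mul_nonneg_of_posSemidef hb hP
  simp only [sub_mul, mul_sub, mul_one, one_mul, smul_mul_assoc, trace_sub, trace_smul, htr,
    smul_eq_mul] at h₁ h₂
  rw [froSq_sub_of_isStarProjection hP hQ, htr]
  linarith

end StarProjection

section Frame

variable {ι κ ρ : Type*} [Fintype ι] [Fintype κ] [Fintype ρ]

lemma froSq_transpose_mul (B : Matrix ι ρ ℝ) (G : Matrix ι κ ℝ) :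
    froSq (Bᵀ * G) = (G * Gᵀ * (B * Bᵀ)).trace := by
  rw [froSq_eq_trace, transpose_mul, transpose_transpose, Matrix.mul_assoc, trace_mul_comm,
    ← Matrix.mul_assoc G, Matrix.mul_assoc]

lemma tendsto_froSq_transpose_mul {α : Type*} {l : Filter α} {G : α → Matrix ι κ ℝ}
    {Gbar : Matrix ι κ ℝ} {B : α → Matrix ι ρ ℝ} {Bbar : Matrix ι ρ ℝ}
    (hB : Tendsto B l (nhds Bbar)) (hG : Tendsto G l (nhds Gbar)) :
    Tendsto (fun k => froSq ((B k)ᵀ * G k)) l (nhds (froSq (Bbarᵀ * Gbar))) := by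
  have hcont : Continuous fun p : Matrix ι ρ ℝ × Matrix ι κ ℝ => froSq (p.1ᵀ * p.2) :=
    continuous_froSq.comp (by fun_prop)
  have hlim := (hcont.tendsto (Bbar, Gbar)).comp (hB.prodMk_nhds hG)
  simpa only [Function.comp_def] using hlim

variable [DecidableEq ρ]

lemma isStarProjection_mul_transpose {B : Matrix ι ρ ℝ} (hB : Bᵀ * B = 1) :
    IsStarProjection (B * Bᵀ) where
  isIdempotentElem := by
    rw [IsIdempotentElem, Matrix.mul_assoc, ← Matrix.mul_assoc Bᵀ, hB, Matrix.one_mul]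
  isSelfAdjoint := isHermitian_mul_conjTranspose_self B

lemma trace_mul_transpose_of_transpose_mul_self_eq_one {B : Matrix ι ρ ℝ} (hB : Bᵀ * B = 1) :
    (B * Bᵀ).trace = Fintype.card ρ := by
  rw [trace_mul_comm, hB, trace_one]

end Frame

section EigenFrame

open Unitary

variable {ι ρ : Type*} [Fintype ι] [DecidableEq ι] {S : Matrix ι ι ℝ}

/-- The matrix whose columns are the orthonormal eigenvectors of `S` selected by `e`. With the top
eigenvectors selected, it is the reference frame in the gap estimate for `S = GGᵀ`. -/
noncomputable def eigenFrame (hS : S.IsHermitian) (e : ρ ↪ ι) : Matrix ι ρ ℝ :=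
  (hS.eigenvectorUnitary : Matrix ι ι ℝ).submatrix id e

lemma eigenFrame_transpose_mul_self [DecidableEq ρ] (hS : S.IsHermitian) (e : ρ ↪ ι) :
    (eigenFrame hS e)ᵀ * eigenFrame hS e = 1 := by
  have hU := coe_star_mul_self hS.eigenvectorUnitary
  rw [star_eq_conjTranspose, conjTranspose_eq_transpose_of_trivial] at hU
  rw [eigenFrame, transpose_submatrix, ← submatrix_mul _ _ _ _ _ Function.bijective_id, hU,
    submatrix_one _ e.injective]

open Classical in
lemma eigenFrame_mul_transpose [Fintype ρ] (hS : S.IsHermitian) (e : ρ ↪ ι) :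
    eigenFrame hS e * (eigenFrame hS e)ᵀ =
      conjStarAlgAut ℝ _ hS.eigenvectorUnitary (diagonal ((Set.range e).indicator 1)) := by
  ext i j
  rw [conjStarAlgAut_apply, mul_apply, mul_apply]
  simp only [mul_diagonal, eigenFrame, transpose_apply, submatrix_apply, id_eq, star_apply,
    star_trivial]
  rw [← Finset.sum_subset (Finset.subset_univ (Finset.univ.map e)), Finset.sum_map]
  · simp
  · intro k _ hk
    have hk' : k ∉ Set.range e := by simpa using hk
    rw [Set.indicator_of_notMem hk', mul_zero, zero_mul]

lemma posSemidef_conjStarAlgAut_diagonal (U : unitary (Matrix ι ι ℝ)) {d : ι → ℝ}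
    (hd : 0 ≤ d) : (conjStarAlgAut ℝ _ U (diagonal d)).PosSemidef := by
  rw [conjStarAlgAut_apply]
  exact (PosSemidef.diagonal hd).mul_mul_conjTranspose_same _

variable [Fintype ρ] (hS : S.IsHermitian) (e : ρ ↪ ι)

lemma commute_eigenFrame_mul_transpose :
    Commute S (eigenFrame hS e * (eigenFrame hS e)ᵀ) := by
  classical
  rw [eigenFrame_mul_transpose]
  nth_rw 1 [hS.spectral_theorem]
  exact (commute_diagonal _ _).map _

lemma posSemidef_sub_smul_mul_eigenFrame {a : ℝ} (ha : ∀ c, a ≤ hS.eigenvalues (e c)) :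
    ((S - a • 1) * (eigenFrame hS e * (eigenFrame hS e)ᵀ)).PosSemidef := by
  classical
  have h : (S - a • 1) * (eigenFrame hS e * (eigenFrame hS e)ᵀ) =
      conjStarAlgAut ℝ _ hS.eigenvectorUnitary
        (diagonal ((Set.range e).indicator fun j => hS.eigenvalues j - a)) := by
    rw [eigenFrame_mul_transpose]
    nth_rw 1 [hS.spectral_theorem]
    rw [← map_one (conjStarAlgAut ℝ _ hS.eigenvectorUnitary), ← map_smul, ← map_sub, ← map_mul,
      smul_one_eq_diagonal, diagonal_sub, diagonal_mul_diagonal]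
    congr! with j
    by_cases hj : j ∈ Set.range e <;> simp [hj]
  rw [h]
  refine posSemidef_conjStarAlgAut_diagonal _ (Set.indicator_nonneg ?_)
  rintro _ ⟨c, rfl⟩
  exact sub_nonneg.2 (ha c)

lemma posSemidef_smul_sub_mul_one_sub_eigenFrame {b : ℝ}
    (hb : ∀ j ∉ Set.range e, hS.eigenvalues j ≤ b) :
    ((b • 1 - S) * (1 - eigenFrame hS e * (eigenFrame hS e)ᵀ)).PosSemidef := by
  classical
  have h : (b • 1 - S) * (1 - eigenFrame hS e * (eigenFrame hS e)ᵀ) =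
      conjStarAlgAut ℝ _ hS.eigenvectorUnitary
        (diagonal ((Set.range e)ᶜ.indicator fun j => b - hS.eigenvalues j)) := by
    rw [eigenFrame_mul_transpose]
    nth_rw 1 [hS.spectral_theorem]
    rw [← map_one (conjStarAlgAut ℝ _ hS.eigenvectorUnitary), ← map_smul, ← map_sub, ← map_sub,
      ← map_mul, smul_one_eq_diagonal, ← diagonal_one, diagonal_sub, diagonal_sub,
      diagonal_mul_diagonal]
    congr! with j
    by_cases hj : j ∈ Set.range e <;> simp [hj]
  rw [h]
  exact posSemidef_conjStarAlgAut_diagonal _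
    (Set.indicator_nonneg fun j hj => sub_nonneg.2 (hb j hj))

end EigenFrame

section SingularValues

variable {m r : ℕ} {κ : Type*} [Fintype κ]

lemma exists_perm_eigList (Y : Matrix (Fin m) κ ℝ) :
    ∃ σ : Equiv.Perm (Fin m),
      Antitone ((isHermitian_mul_conjTranspose_self Y).eigenvalues ∘ σ) ∧
      eigList Y = List.ofFn ((isHermitian_mul_conjTranspose_self Y).eigenvalues ∘ σ) := by
  set d := (isHermitian_mul_conjTranspose_self Y).eigenvalues
  have hanti : Antitone (d ∘ (Fin.revPerm.trans (Tuple.sort d))) :=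
    (Tuple.monotone_sort d).comp_antitone Fin.rev_anti
  refine ⟨_, hanti, List.Perm.eq_of_sortedGE ?_ hanti.sortedGE_ofFn ?_⟩
  · exact (Multiset.pairwise_sort _ _).sortedLE.reverse
  · rw [← Multiset.coe_eq_coe, eigList, Multiset.coe_reverse, Multiset.sort_eq,
      ← Fin.univ_val_map, ← Multiset.map_map, Multiset.map_univ_val_equiv]

lemma getD_eigList_nonneg (Y : Matrix (Fin m) κ ℝ) (i : ℕ) : 0 ≤ (eigList Y).getD i 0 := by
  obtain ⟨σ, -, hσ⟩ := exists_perm_eigList Y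
  rw [hσ]
  rcases lt_or_ge i m with hi | hi
  · rw [List.getD_eq_getElem _ _ (by simpa using hi), List.getElem_ofFn]
    exact eigenvalues_self_mul_conjTranspose_nonneg Y _
  · rw [List.getD_eq_default _ _ (by simpa using hi)]

lemma sval_sq (Y : Matrix (Fin m) κ ℝ) (i : ℕ) : sval Y i ^ 2 = (eigList Y).getD (i - 1) 0 :=
  Real.sq_sqrt (getD_eigList_nonneg Y _)

lemma exists_embedding_sval_sq_separates (hr : r ≤ m) (Y : Matrix (Fin m) κ ℝ) :
    ∃ e : Fin r ↪ Fin m,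
      (∀ c, sval Y r ^ 2 ≤ (isHermitian_mul_conjTranspose_self Y).eigenvalues (e c)) ∧
      ∀ j ∉ Set.range e,
        (isHermitian_mul_conjTranspose_self Y).eigenvalues j ≤ sval Y (r + 1) ^ 2 := by
  obtain ⟨σ, hanti, hσ⟩ := exists_perm_eigList Y
  refine ⟨(Fin.castLEEmb hr).trans σ.toEmbedding, fun c => ?_, fun j hj => ?_⟩
  · have hr' : r - 1 < m := (Nat.sub_one_lt_of_lt c.2).trans_le hr
    rw [sval_sq, hσ, List.getD_eq_getElem _ _ (by simpa using hr'), List.getElem_ofFn]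
    exact hanti (show Fin.castLE hr c ≤ ⟨r - 1, hr'⟩ from Nat.le_sub_one_of_lt c.2)
  · obtain ⟨i, rfl⟩ := σ.surjective j
    have hi : r ≤ i := by
      by_contra! h
      exact hj ⟨⟨i, h⟩, rfl⟩
    have hr' : r < m := hi.trans_lt i.2
    rw [sval_sq, hσ, Nat.add_sub_cancel, List.getD_eq_getElem _ _ (by simpa using hr'),
      List.getElem_ofFn]
    exact hanti (show ⟨r, hr'⟩ ≤ i from hi)

theorem exists_frame_gap_mul_froSq_le (hr : r ≤ m) (G : Matrix (Fin m) κ ℝ) :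
    ∃ C : Matrix (Fin m) (Fin r) ℝ, Cᵀ * C = 1 ∧ Commute (G * Gᵀ) (C * Cᵀ) ∧
      ∀ B : Matrix (Fin m) (Fin r) ℝ, Bᵀ * B = 1 →
        (sval G r ^ 2 - sval G (r + 1) ^ 2) * froSq (C * Cᵀ - B * Bᵀ) ≤
          2 * (froSq (Cᵀ * G) - froSq (Bᵀ * G)) := by
  obtain ⟨e, htop, hbot⟩ := exists_embedding_sval_sq_separates hr G
  have hS := isHermitian_mul_conjTranspose_self G
  have hC := eigenFrame_transpose_mul_self hS e
  refine ⟨eigenFrame hS e, hC, commute_eigenFrame_mul_transpose hS e, fun B hB => ?_⟩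
  rw [froSq_transpose_mul, froSq_transpose_mul]
  refine mul_froSq_sub_le_of_posSemidef (isStarProjection_mul_transpose hB)
    (isStarProjection_mul_transpose hC) ?_ (posSemidef_sub_smul_mul_eigenFrame hS e htop)
    (posSemidef_smul_sub_mul_one_sub_eigenFrame hS e hbot)
  rw [trace_mul_transpose_of_transpose_mul_self_eq_one hB,
    trace_mul_transpose_of_transpose_mul_self_eq_one hC]

end SingularValues

section DominantFrame

variable {ι κ ρ : Type*} [Fintype ι] [Fintype κ] [Fintype ρ] [DecidableEq ρ]

/-- `B` has orthonormal columns and captures as much of `G` as any such frame: it maximizes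
`‖BᵀG‖_F`, as every HOOI update does for its own block. -/
structure IsDominantFrame (G : Matrix ι κ ℝ) (B : Matrix ι ρ ℝ) : Prop where
  orthonormal : Bᵀ * B = 1
  froSq_le : ∀ C : Matrix ι ρ ℝ, Cᵀ * C = 1 → froSq (Cᵀ * G) ≤ froSq (Bᵀ * G)

/-- `B` is a dominant frame of `G` closest to `A` in Frobenius norm: the greedy HOOI update of
the block `A`. -/
structure IsNearestDominantFrame (G : Matrix ι κ ℝ) (A B : Matrix ι ρ ℝ) : Prop
    extends IsDominantFrame G B where
  fro_sub_le : ∀ C : Matrix ι ρ ℝ, IsDominantFrame G C → fro (B - A) ≤ fro (C - A)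

lemma IsDominantFrame.mul_orthogonal {G : Matrix ι κ ℝ} {B : Matrix ι ρ ℝ}
    (hB : IsDominantFrame G B) {Q : Matrix ρ ρ ℝ} (hQ : Qᵀ * Q = 1) :
    IsDominantFrame G (B * Q) where
  orthonormal := by
    rw [transpose_mul, Matrix.mul_assoc, ← Matrix.mul_assoc Bᵀ, hB.orthonormal, Matrix.one_mul, hQ]
  froSq_le C hC := by
    have hproj : B * Q * (B * Q)ᵀ = B * Bᵀ := by
      rw [transpose_mul, Matrix.mul_assoc, ← Matrix.mul_assoc Q, mul_eq_one_comm.1 hQ,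
        Matrix.one_mul]
    rw [froSq_transpose_mul (B * Q), hproj, ← froSq_transpose_mul]
    exact hB.froSq_le C hC

lemma exists_orthogonal_of_mul_transpose_eq {A C : Matrix ι ρ ℝ} (hA : Aᵀ * A = 1)
    (h : C * Cᵀ = A * Aᵀ) : ∃ Q : Matrix ρ ρ ℝ, Qᵀ * Q = 1 ∧ C * Q = A := by
  have hCQ : C * (Cᵀ * A) = A := by
    rw [← Matrix.mul_assoc, h, Matrix.mul_assoc, hA, Matrix.mul_one]
  refine ⟨Cᵀ * A, ?_, hCQ⟩
  rw [transpose_mul, transpose_transpose, Matrix.mul_assoc, hCQ, hA]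

lemma isDominantFrame_of_tendsto {α : Type*} {l : Filter α} [l.NeBot] {G : α → Matrix ι κ ℝ}
    {Gbar : Matrix ι κ ℝ} {A B : α → Matrix ι ρ ℝ} {Abar : Matrix ι ρ ℝ}
    (hG : Tendsto G l (nhds Gbar)) (hA : Tendsto A l (nhds Abar)) (hAo : ∀ k, (A k)ᵀ * A k = 1)
    (hB : ∀ k, IsDominantFrame (G k) (B k))
    (hgain : Tendsto (fun k => froSq ((B k)ᵀ * G k) - froSq ((A k)ᵀ * G k)) l (nhds 0)) :
    IsDominantFrame Gbar Abar where
  orthonormal :=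
    (isClosed_eq (by fun_prop) continuous_const :
      IsClosed {M : Matrix ι ρ ℝ | Mᵀ * M = 1}).mem_of_tendsto hA (.of_forall hAo)
  froSq_le C hC := by
    have hlim : Tendsto (fun k => froSq ((B k)ᵀ * G k)) l (nhds (froSq (Abarᵀ * Gbar))) := by
      simpa using hgain.add (tendsto_froSq_transpose_mul hA hG)
    exact le_of_tendsto_of_tendsto' (tendsto_froSq_transpose_mul tendsto_const_nhds hG) hlim
      fun k => (hB k).froSq_le C hC

end DominantFrame

section SpectralGap

variable {m r : ℕ} {κ : Type*} [Fintype κ]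

lemma exists_commute_forall_mul_transpose_eq (hr : r ≤ m) {G : Matrix (Fin m) κ ℝ}
    (hgap : sval G (r + 1) < sval G r) :
    ∃ P, Commute (G * Gᵀ) P ∧
      ∀ B : Matrix (Fin m) (Fin r) ℝ, IsDominantFrame G B → B * Bᵀ = P := by
  obtain ⟨C, hC, hcomm, hbound⟩ := exists_frame_gap_mul_froSq_le hr G
  refine ⟨C * Cᵀ, hcomm, fun B hB => ?_⟩
  have hpos : 0 < sval G r ^ 2 - sval G (r + 1) ^ 2 :=
    sub_pos.2 (pow_lt_pow_left₀ hgap (Real.sqrt_nonneg _) two_ne_zero)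
  have hzero : froSq (C * Cᵀ - B * Bᵀ) ≤ 0 := by
    refine nonpos_of_mul_nonpos_right ?_ hpos
    linarith [hbound B hB.orthonormal, hB.froSq_le C hC]
  exact (sub_eq_zero.1 (froSq_eq_zero.1 (hzero.antisymm (froSq_nonneg _)))).symm

lemma IsDominantFrame.mul_transpose_mul_self (hr : r ≤ m) {G : Matrix (Fin m) κ ℝ}
    (hgap : sval G (r + 1) < sval G r) {B : Matrix (Fin m) (Fin r) ℝ}
    (hB : IsDominantFrame G B) : G * Gᵀ * B = B * Bᵀ * (G * Gᵀ * B) := by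
  obtain ⟨P, hcomm, hP⟩ := exists_commute_forall_mul_transpose_eq hr hgap
  rw [← Matrix.mul_assoc (B * Bᵀ), hP B hB, ← hcomm.eq, ← hP B hB, Matrix.mul_assoc (G * Gᵀ),
    Matrix.mul_assoc B, hB.orthonormal, Matrix.mul_one]

-- Any cluster point of `B` is `Abar` up to a rotation, and nearness excludes a nontrivial one.
theorem tendsto_of_isNearestDominantFrame {α : Type*} {l : Filter α} (hr : r ≤ m)
    {G : α → Matrix (Fin m) κ ℝ} {Gbar : Matrix (Fin m) κ ℝ}
    {A B : α → Matrix (Fin m) (Fin r) ℝ} {Abar : Matrix (Fin m) (Fin r) ℝ}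
    (hgap : sval Gbar (r + 1) < sval Gbar r) (hG : Tendsto G l (nhds Gbar))
    (hA : Tendsto A l (nhds Abar)) (hAbar : IsDominantFrame Gbar Abar)
    (hB : ∀ k, IsNearestDominantFrame (G k) (A k) (B k)) : Tendsto B l (nhds Abar) := by
  refine isCompact_setOf_transpose_mul_self_eq_one.tendsto_nhds_of_unique_mapClusterPt
    (.of_forall fun k => (hB k).orthonormal) fun C _ hcluster => ?_
  obtain ⟨F, hF, hBC⟩ := mapClusterPt_iff_ultrafilter.1 hcluster
  have hGF : Tendsto G F (nhds Gbar) := hG.mono_left hF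
  have hAF : Tendsto A F (nhds Abar) := hA.mono_left hF
  have hC : IsDominantFrame Gbar C :=
    isDominantFrame_of_tendsto hGF hBC (fun k => (hB k).orthonormal)
      (fun k => (hB k).toIsDominantFrame) (by simp only [sub_self, tendsto_const_nhds])
  obtain ⟨P, -, hP⟩ := exists_commute_forall_mul_transpose_eq hr hgap
  obtain ⟨Q, hQ, hCQ⟩ :=
    exists_orthogonal_of_mul_transpose_eq hAbar.orthonormal ((hP C hC).trans (hP Abar hAbar).symm)
  have hnear : ∀ k, fro (B k - A k) ≤ fro (B k * Q - A k) := fun k =>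
    (hB k).fro_sub_le _ ((hB k).mul_orthogonal hQ)
  have hrot : Tendsto (fun k => fro (B k * Q - A k)) F (nhds 0) := by
    rw [← fro_eq_zero.2 (sub_self Abar)]
    nth_rw 1 [← hCQ]
    exact (continuous_fro.tendsto _).comp
      ((((continuous_id.matrix_mul continuous_const).tendsto C).comp hBC).sub hAF)
  have hdist := le_of_tendsto_of_tendsto' ((continuous_fro.tendsto _).comp (hBC.sub hAF)) hrot hnear
  exact sub_eq_zero.1 (fro_eq_zero.1 (hdist.antisymm (Real.sqrt_nonneg _)))

end SpectralGap

section Tensor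

variable {N : ℕ} {I r : Fin N → ℕ} (X : ((n : Fin N) → Fin (I n)) → ℝ)

lemma Gmat_update (A : (n : Fin N) → Matrix (Fin (I n)) (Fin (r n)) ℝ) (n : Fin N)
    (B : Matrix (Fin (I n)) (Fin (r n)) ℝ) : Gmat X (Function.update A n B) n = Gmat X A n := by
  ext j c
  refine Finset.sum_congr rfl fun idx _ => congrArg _ (Finset.prod_congr rfl fun m _ => ?_)
  rw [Function.update_of_ne m.2]

lemma fval_eq_froSq (A : (n : Fin N) → Matrix (Fin (I n)) (Fin (r n)) ℝ) (n : Fin N) :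
    fval X A = froSq ((A n)ᵀ * Gmat X A n) := by
  unfold fval froSq
  rw [← (Equiv.piSplitAt n (fun i => Fin (r i))).symm.sum_comp, Fintype.sum_prod_type]
  refine Finset.sum_congr rfl fun c _ => Finset.sum_congr rfl fun c' _ => congrArg (· ^ 2) ?_
  rw [← (Equiv.piSplitAt n (fun i => Fin (I i))).symm.sum_comp, Fintype.sum_prod_type, mul_apply]
  refine Finset.sum_congr rfl fun j _ => ?_
  rw [transpose_apply, Gmat, Finset.mul_sum]
  refine Finset.sum_congr rfl fun idx _ => ?_
  have hidx : (Equiv.piSplitAt n (fun i => Fin (I i))).symm (j, idx) =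
      fun i => if h : i = n then Fin.cast (by rw [h]) j else idx ⟨i, h⟩ := by
    funext i
    by_cases h : i = n
    · subst h
      simp
    · simp [h]
  have hprod : ∏ m : {m // m ≠ n}, A m ((Equiv.piSplitAt n (fun i => Fin (I i))).symm (j, idx) m)
        ((Equiv.piSplitAt n (fun i => Fin (r i))).symm (c, c') m) =
      ∏ m : {m // m ≠ n}, A m (idx m) (c' m) :=
    Finset.prod_congr rfl fun m _ => by simp [m.2]
  rw [Fintype.prod_eq_mul_prod_subtype_ne _ n, hprod, ← hidx]
  simp only [Equiv.piSplitAt_symm_apply, dite_true]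
  ring

lemma continuous_Gmat (n : Fin N) :
    Continuous fun A : (n : Fin N) → Matrix (Fin (I n)) (Fin (r n)) ℝ => Gmat X A n := by
  refine continuous_matrix fun j c => ?_
  unfold Gmat
  exact continuous_finsetSum _ fun idx _ => continuous_const.mul <|
    continuous_finsetProd _ fun m _ => (continuous_apply m.1).matrix_elem _ _

lemma continuous_fval :
    Continuous fun A : (n : Fin N) → Matrix (Fin (I n)) (Fin (r n)) ℝ => fval X A := by
  unfold fval
  exact continuous_finsetSum _ fun c _ => .pow (continuous_finsetSum _ fun idx _ =>
    continuous_const.mul <| continuous_finsetProd _ fun m _ =>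
      (continuous_apply m).matrix_elem _ _) 2

lemma isCompact_setOf_TFeas (I r : Fin N → ℕ) :
    IsCompact {A : (n : Fin N) → Matrix (Fin (I n)) (Fin (r n)) ℝ | TFeas A} := by
  simpa only [Set.pi, Set.mem_univ, true_imp_iff, Set.mem_ofPred_eq, TFeas] using
    isCompact_univ_pi fun n : Fin N =>
      isCompact_setOf_transpose_mul_self_eq_one (ι := Fin (I n)) (ρ := Fin (r n))

/-- The tuple reached after the first `t` block updates of a sweep from `A` to `B`. Unlike `hyb`,
which is the case `t = n` with `n : Fin N`, it includes the completed sweep `t = N`, so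
that `fval` along a HOOI sweep is monotone in `t : ℕ` from one iterate to the next. -/
def sweep (A B : (n : Fin N) → Matrix (Fin (I n)) (Fin (r n)) ℝ) (t : ℕ) :
    (i : Fin N) → Matrix (Fin (I i)) (Fin (r i)) ℝ :=
  fun i => if (i : ℕ) < t then B i else A i

variable (A B : (n : Fin N) → Matrix (Fin (I n)) (Fin (r n)) ℝ)

lemma sweep_zero : sweep A B 0 = A := by
  funext i
  simp [sweep]

lemma sweep_of_le {t : ℕ} (ht : N ≤ t) : sweep A B t = B :=
  funext fun i => if_pos (i.2.trans_le ht)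

lemma sweep_coe (n : Fin N) : sweep A B n = hyb A B n := rfl

lemma sweep_coe_succ (n : Fin N) :
    sweep A B (n + 1) = Function.update (hyb A B n) n (B n) := by
  funext i
  rcases eq_or_ne i n with rfl | hi
  · simp [sweep]
  · have hlt : (i : ℕ) < n + 1 ↔ i < n := by
      rw [Nat.lt_succ_iff_lt_or_eq, Fin.val_inj, or_iff_left hi, Fin.lt_def]
    simp only [sweep, hyb, Function.update_of_ne hi, hlt]

lemma fval_sweep_coe (n : Fin N) :
    fval X (sweep A B n) = froSq ((A n)ᵀ * Gmat X (hyb A B n) n) := by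
  rw [sweep_coe, fval_eq_froSq X _ n]
  simp only [hyb, lt_irrefl, if_false]

lemma fval_sweep_coe_succ (n : Fin N) :
    fval X (sweep A B (n + 1)) = froSq ((B n)ᵀ * Gmat X (hyb A B n) n) := by
  rw [sweep_coe_succ, fval_eq_froSq X _ n, Function.update_self, Gmat_update]

end Tensor

section HOOI

variable {N : ℕ} {I r : Fin N → ℕ} {X : ((n : Fin N) → Fin (I n)) → ℝ}
  {A : ℕ → (n : Fin N) → Matrix (Fin (I n)) (Fin (r n)) ℝ}

lemma IsHOOI.isDominantFrame (hA : IsHOOI X A) (k : ℕ) (n : Fin N) :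
    IsDominantFrame (Gseq X A k n) (A (k + 1) n) :=
  ⟨hA.1 (k + 1) n, hA.2 k n⟩

lemma IsGreedyHOOI.isNearestDominantFrame (hA : IsGreedyHOOI X A) (k : ℕ) (n : Fin N) :
    IsNearestDominantFrame (Gseq X A k n) (A k n) (A (k + 1) n) :=
  ⟨hA.1.isDominantFrame k n, fun C hC => hA.2 k n C hC.orthonormal hC.froSq_le⟩

lemma IsHOOI.monotone_fval_sweep (hA : IsHOOI X A) (k : ℕ) :
    Monotone fun t => fval X (sweep (A k) (A (k + 1)) t) := by
  refine monotone_nat_of_le_succ fun t => ?_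
  rcases lt_or_ge t N with ht | ht
  · have hle := (hA.isDominantFrame k ⟨t, ht⟩).froSq_le _ (hA.1 k ⟨t, ht⟩)
    rwa [Gseq, ← fval_sweep_coe, ← fval_sweep_coe_succ] at hle
  · rw [sweep_of_le _ _ ht, sweep_of_le _ _ (ht.trans t.le_succ)]

lemma IsHOOI.monotone_fval (hA : IsHOOI X A) : Monotone fun k => fval X (A k) :=
  monotone_nat_of_le_succ fun k => by
    simpa only [sweep_zero, sweep_of_le _ _ le_rfl] using hA.monotone_fval_sweep k N.zero_le

lemma IsHOOI.exists_tendsto_fval (hA : IsHOOI X A) :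
    ∃ L, Tendsto (fun k => fval X (A k)) atTop (nhds L) := by
  have hbdd : BddAbove (Set.range fun k => fval X (A k)) :=
    ((isCompact_setOf_TFeas I r).image (continuous_fval X)).bddAbove.mono
      (Set.range_subset_iff.2 fun k => Set.mem_image_of_mem _ (hA.1 k))
  exact ⟨_, tendsto_atTop_ciSup hA.monotone_fval hbdd⟩

lemma IsHOOI.tendsto_blockGain (hA : IsHOOI X A) (n : Fin N) :
    Tendsto (fun k => froSq ((A (k + 1) n)ᵀ * Gseq X A k n) - froSq ((A k n)ᵀ * Gseq X A k n))
      atTop (nhds 0) := by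
  obtain ⟨L, hL⟩ := hA.exists_tendsto_fval
  have hstep : Tendsto (fun k => fval X (A (k + 1)) - fval X (A k)) atTop (nhds 0) := by
    simpa only [sub_self, Function.comp_def] using (hL.comp (tendsto_add_atTop_nat 1)).sub hL
  refine squeeze_zero (fun k => sub_nonneg.2 ?_) (fun k => ?_) hstep
  · exact (hA.isDominantFrame k n).froSq_le _ (hA.1 k n)
  · rw [Gseq, ← fval_sweep_coe, ← fval_sweep_coe_succ]
    have hstart := hA.monotone_fval_sweep k (Nat.zero_le n)
    have hend := hA.monotone_fval_sweep k n.2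
    simp only [sweep_zero] at hstart
    simp only [sweep_of_le _ _ le_rfl] at hend
    exact sub_le_sub hend hstart

theorem IsGreedyHOOI.isDominantFrame_and_tendsto_succ (hr : ∀ n, r n ≤ I n)
    (hA : IsGreedyHOOI X A) {Abar : (n : Fin N) → Matrix (Fin (I n)) (Fin (r n)) ℝ}
    (hnd : NonDeg X Abar) {φ : ℕ → ℕ} (hφ : Tendsto φ atTop atTop)
    (hlim : ∀ n, Tendsto (fun k => A (φ k) n) atTop (nhds (Abar n))) (n : Fin N) :
    IsDominantFrame (Gmat X Abar n) (Abar n) ∧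
      Tendsto (fun k => A (φ k + 1) n) atTop (nhds (Abar n)) := by
  induction n using WellFoundedLT.induction with
  | ind n ih =>
    have hhyb : Tendsto (fun k => hyb (A (φ k)) (A (φ k + 1)) n) atTop (nhds Abar) := by
      refine tendsto_pi_nhds.2 fun i => ?_
      rcases lt_or_ge i n with hi | hi
      · simpa only [hyb, hi, if_true] using (ih i hi).2
      · simpa only [hyb, hi.not_gt, if_false] using hlim i
    have hG : Tendsto (fun k => Gseq X A (φ k) n) atTop (nhds (Gmat X Abar n)) :=
      ((continuous_Gmat X n).tendsto Abar).comp hhyb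
    have hdom : IsDominantFrame (Gmat X Abar n) (Abar n) :=
      isDominantFrame_of_tendsto hG (hlim n) (fun k => hA.1.1 (φ k) n)
        (fun k => hA.1.isDominantFrame (φ k) n) ((hA.1.tendsto_blockGain n).comp hφ)
    exact ⟨hdom, tendsto_of_isNearestDominantFrame (hr n) (hnd n) hG (hlim n) hdom fun k =>
      hA.isNearestDominantFrame (φ k) n⟩

end HOOI

/-- Every block-nondegenerate limit point of a greedy HOOI
sequence is a critical point and a block-wise maximizer. -/
theorem stmt10 {N : ℕ} {I r : Fin N → ℕ} (hr : ∀ n, r n ≤ I n)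
    (X : ((n : Fin N) → Fin (I n)) → ℝ)
    (A : ℕ → (n : Fin N) → Matrix (Fin (I n)) (Fin (r n)) ℝ)
    (hA : IsGreedyHOOI X A)
    (Abar : (n : Fin N) → Matrix (Fin (I n)) (Fin (r n)) ℝ)
    (hfeas : TFeas Abar) (hlim : IsLimitPt A Abar) (hnd : NonDeg X Abar) :
    Critical X Abar ∧ BlockMax X Abar := by
  obtain ⟨φ, hφ, hfro⟩ := hlim
  have hdom : ∀ n, IsDominantFrame (Gmat X Abar n) (Abar n) := fun n =>
    (hA.isDominantFrame_and_tendsto_succ hr hnd hφ.tendsto_atTop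
      (fun m => tendsto_iff_fro_sub_tendsto_zero.2 (hfro m)) n).1
  exact ⟨fun n => (hdom n).mul_transpose_mul_self (hr n) (hnd n), fun n => (hdom n).froSq_le⟩
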